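/- For all n ≥ 0, D_n^B(q, Z) = sum over k from 0 to n of (n choose k)_{q^2} * (-1)^k * q^{k(k-1)} * ((q^2;q^2)_{n-k} / (1 - q^2)^{n-k}) * (1 + qZ)^{n-k}, where D_n^B(q,Z) is the generating polynomial for signed derangements of order n by (fmaj, neg). -/

import Mathlib

open Finset

attribute [local instance] Classical.propDecidable

noncomputable section

/-- The word `x_1 x_2 ... x_n` (0-indexed) of a signed permutation of order `n`,
encoded as a pair (permutation, signs): `x_i = ±(σ(i)+1)`. -/
def sword (n : ℕ) (w : Equiv.Perm (Fin n) × (Fin n → Bool)) : ℕ → ℤ :=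
  fun i => if h : i < n then
      (if w.2 ⟨i, h⟩ then -(((w.1 ⟨i, h⟩ : ℕ) : ℤ) + 1) else (((w.1 ⟨i, h⟩ : ℕ) : ℤ) + 1))
    else 0

/-- number of negative letters -/
def negStat (n : ℕ) (x : ℕ → ℤ) : ℕ := ((Finset.range n).filter (fun i => x i < 0)).card

/-- number of positive fixed points (`x_i = i`, 1-indexed) -/
def fixPlus (n : ℕ) (x : ℕ → ℤ) : ℕ :=
  ((Finset.range n).filter (fun i => x i = (i : ℤ) + 1)).card

/-- number of negative fixed points (`x_i = -i`, 1-indexed) -/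
def fixMinus (n : ℕ) (x : ℕ → ℤ) : ℕ :=
  ((Finset.range n).filter (fun i => x i = -((i : ℤ) + 1))).card

/-- major index of the word -/
def majStat (n : ℕ) (x : ℕ → ℤ) : ℕ :=
  ∑ i ∈ Finset.range (n - 1), if x (i + 1) < x i then i + 1 else 0

/-- number of inversions of the word -/
def invStat (n : ℕ) (x : ℕ → ℤ) : ℕ :=
  ((Finset.range n ×ˢ Finset.range n).filter (fun p => p.1 < p.2 ∧ x p.2 < x p.1)).card

/-- length function `ℓ(w) = inv w + ∑_{x_i<0} |x_i|` -/
def lenStat (n : ℕ) (x : ℕ → ℤ) : ℕ :=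
  invStat n x + ∑ i ∈ Finset.range n, if x i < 0 then (x i).natAbs else 0

/-- flag-major index `fmaj = 2 maj + neg` -/
def fmajStat (n : ℕ) (x : ℕ → ℤ) : ℕ := 2 * majStat n x + negStat n x

/-- the word `x_0 ... x_{m-1}` has its leftmost trough at position `2k` (1-indexed):
`x_1 > x_2 > ... > x_{2k}` and `x_{2k} < x_{2k+1}` (with `x_{m+1} = ∞`). -/
def IsDesarAt (m k : ℕ) (x : ℕ → ℤ) : Prop :=
  1 ≤ k ∧ 2 * k ≤ m ∧ (∀ i, i + 1 < 2 * k → x (i + 1) < x i) ∧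
    (2 * k = m ∨ x (2 * k - 1) < x (2 * k))

/-- a word of length `m` is a desarrangement (empty word included) -/
def IsDesar (m : ℕ) (x : ℕ → ℤ) : Prop :=
  m = 0 ∨ ∃ k, IsDesarAt m k x

/-- the length of the longest right factor of the word of length `n`
which is a desarrangement -/
def dlen (n : ℕ) (x : ℕ → ℤ) : ℕ :=
  sSup {m | m ≤ n ∧ IsDesar m (fun i => x (n - m + i))}

/-- number of letters of `w^-` in the pixed factorization `w = w^- w^+ w^d` -/
def pixMinus (n : ℕ) (x : ℕ → ℤ) : ℕ :=
  ((Finset.range (n - dlen n x)).filter (fun i => x i < 0)).card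

/-- number of letters of `w^+` in the pixed factorization `w = w^- w^+ w^d` -/
def pixPlus (n : ℕ) (x : ℕ → ℤ) : ℕ :=
  ((Finset.range (n - dlen n x)).filter (fun i => 0 < x i)).card

/-- the number of derangements of an `m`-element set -/
def dnum (m : ℕ) : ℕ :=
  (Finset.univ.filter (fun σ : Equiv.Perm (Fin m) => ∀ i, σ i ≠ i)).card

/-- the word of an ordinary permutation of `{1, ..., m}` -/
def pword (m : ℕ) (σ : Equiv.Perm (Fin m)) : ℕ → ℤ :=
  fun i => if h : i < m then ((σ ⟨i, h⟩ : ℕ) : ℤ) + 1 else 0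

/-- the q-ascending factorial `(q;q)_m` -/
def qq {K : Type*} [CommRing K] (q : K) (m : ℕ) : K :=
  ∏ i ∈ Finset.range m, (1 - q ^ (i + 1))

/-- `D_m(q)`: generating polynomial for derangements of order `m` by major index -/
def Dmaj {K : Type*} [CommRing K] (q : K) (m : ℕ) : K :=
  ∑ σ ∈ Finset.univ.filter (fun σ : Equiv.Perm (Fin m) => ∀ i, σ i ≠ i),
    q ^ majStat m (pword m σ)

/-- `D_n^B(q,Z)`: generating polynomial for signed derangements of order `n`
(no positive fixed point) by `(fmaj, neg)`. -/
def DB {K : Type*} [CommRing K] (q Z : K) (n : ℕ) : K :=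
  ∑ w ∈ Finset.univ.filter
      (fun w : Equiv.Perm (Fin n) × (Fin n → Bool) => fixPlus n (sword n w) = 0),
    q ^ fmajStat n (sword n w) * Z ^ negStat n (sword n w)

/-- Gaussian binomial `(m+k choose k)_p` by recursion. -/
def gB {K : Type*} [CommRing K] (p : K) : ℕ → ℕ → K
  | _, 0 => 1
  | 0, _ + 1 => 1
  | m + 1, k + 1 => gB p (m + 1) k + p ^ (k + 1) * gB p m (k + 1)

theorem gB_zero_right {K : Type*} [CommRing K] (p : K) (m : ℕ) : gB p m 0 = 1 := by
  cases m <;> simp [gB]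

theorem gB_zero_left {K : Type*} [CommRing K] (p : K) (k : ℕ) : gB p 0 k = 1 := by
  cases k <;> simp [gB]

theorem gB_succ {K : Type*} [CommRing K] (p : K) (m k : ℕ) :
    gB p (m + 1) (k + 1) = gB p (m + 1) k + p ^ (k + 1) * gB p m (k + 1) := by
  simp [gB]

theorem gB_key {K : Type*} [CommRing K] (p : K) (N : ℕ) : ∀ m k, m + k = N →
    (1 - p ^ (m + 1)) * gB p (m + 1) k = (1 - p ^ (k + 1)) * gB p m (k + 1) := by
  induction N with
  | zero =>
    intro m k h
    obtain rfl : m = 0 := by omega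
    obtain rfl : k = 0 := by omega
    simp [gB]
  | succ N ih =>
    -- first: both sides equal (1 - p^(m+k+1)) * gB m k
    have hL : ∀ m k, m + k = N + 1 →
        (1 - p ^ (m + 1)) * gB p (m + 1) k = (1 - p ^ (m + k + 1)) * gB p m k := by
      intro m k h
      cases k with
      | zero => simp [gB_zero_right]
      | succ k =>
        have := ih m k (by omega)
        rw [gB_succ]
        linear_combination this
    have hR : ∀ m k, m + k = N + 1 →
        (1 - p ^ (k + 1)) * gB p m (k + 1) = (1 - p ^ (m + k + 1)) * gB p m k := by
      intro m k h
      cases m with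
      | zero => simp [gB_zero_left]
      | succ m =>
        have := ih m k (by omega)
        rw [gB_succ]
        linear_combination (-p ^ (k + 1)) * this
    intro m k h
    rw [hL m k h, hR m k h]

theorem gB_succ' {K : Type*} [CommRing K] (p : K) (m k : ℕ) :
    gB p (m + 1) (k + 1) = p ^ (m + 1) * gB p (m + 1) k + gB p m (k + 1) := by
  have := gB_key p _ m k rfl
  rw [gB_succ]
  linear_combination this

theorem qq_succ {K : Type*} [CommRing K] (p : K) (m : ℕ) :
    qq p (m + 1) = qq p m * (1 - p ^ (m + 1)) := by
  simp [qq, Finset.prod_range_succ]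

theorem gB_qq {K : Type*} [CommRing K] (p : K) (k : ℕ) : ∀ m,
    gB p m k * (qq p m * qq p k) = qq p (m + k) := by
  induction k with
  | zero => intro m; simp [gB_zero_right, qq]
  | succ k ih =>
    intro m
    have h1 := gB_key p _ m k rfl
    have h2 := ih (m + 1)
    rw [qq_succ] at h2 ⊢
    rw [show m + (k + 1) = m + 1 + k by ring, ← h2]
    linear_combination (-(qq p m * qq p k)) * h1

theorem gB_alt {K : Type*} [CommRing K] (p : K) (j : ℕ) :
    ∑ x ∈ antidiagonal (j + 1), (-1) ^ x.1 * p ^ (x.1 * (x.1 - 1) / 2) * gB p x.2 x.1 = 0 := by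
  have aux : ∀ k, k * (k - 1) / 2 + k = (k + 1) * k / 2 := by
    intro k
    rw [← Nat.add_mul_div_left _ _ (by norm_num : 0 < 2)]
    congr 1
    cases k <;> simp <;> ring
  let f : ℕ → ℕ → K := fun k l => (-1) ^ k * p ^ ((k + 1) * k / 2) * gB p l k
  -- split using Pascal on pairs
  have h : ∀ x ∈ antidiagonal (j + 1), (-1) ^ x.1 * p ^ (x.1 * (x.1 - 1) / 2) * gB p x.2 x.1
      = (if x.2 = 0 then 0 else f x.1 (x.2 - 1)) - (if x.1 = 0 then 0 else f (x.1 - 1) x.2) := by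
    rintro ⟨k, l⟩ hx
    rw [Finset.HasAntidiagonal.mem_antidiagonal] at hx
    simp only at hx ⊢
    rcases k with _ | k
    · obtain rfl : l = j + 1 := by omega
      simp [f, gB_zero_right]
    · rcases l with _ | l
      · simp only [f, gB_zero_left]
        simp [pow_succ]
      · simp only [f, gB_succ, ← aux (k + 1)]
        simp
        ring
  rw [Finset.sum_congr rfl h, Finset.sum_sub_distrib, sub_eq_zero]
  conv_lhs => rw [Finset.Nat.antidiagonal_succ']
  conv_rhs => rw [Finset.Nat.antidiagonal_succ]
  simp

/-- shuffle of the word `v` with zeros at the positions in `F` -/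
def shW (v : ℕ → ℤ) (F : Finset ℕ) : ℕ → ℤ :=
  fun i => if i ∈ F then 0 else v (Nat.count (fun j => j ∉ F) i)

theorem count_congr' {p r : ℕ → Prop} [DecidablePred p] [DecidablePred r] (n : ℕ)
    (h : ∀ i < n, (p i ↔ r i)) : Nat.count p n = Nat.count r n := by
  rw [Nat.count_eq_card_filter_range, Nat.count_eq_card_filter_range]
  congr 1
  ext i
  simp only [mem_filter, mem_range]
  constructor
  · rintro ⟨a, b⟩; exact ⟨a, (h i a).1 b⟩
  · rintro ⟨a, b⟩; exact ⟨a, (h i a).2 b⟩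

theorem shW_insert (v : ℕ → ℤ) (F : Finset ℕ) (N i : ℕ) (h : i < N) :
    shW v (insert N F) i = shW v F i := by
  unfold shW
  have h1 : (i ∈ insert N F) = (i ∈ F) := by
    simp [Finset.mem_insert, h.ne]
  have h2 : Nat.count (fun j => j ∉ insert N F) i = Nat.count (fun j => j ∉ F) i := by
    apply count_congr'
    intro j hj
    have : j ≠ N := by omega
    simp [this]
  rw [h2]
  simp only [h1]

theorem count_sub (F : Finset ℕ) (N : ℕ) (h : F ⊆ range N) :
    Nat.count (fun j => j ∉ F) N + F.card = N := by
  rw [Nat.count_eq_card_filter_range]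
  have : (range N).filter (fun j => j ∉ F) = range N \ F := by
    ext; simp
  rw [this, Finset.card_sdiff_of_subset h, card_range]
  have := card_le_card h
  rw [card_range] at this
  omega

theorem maj_succ (n : ℕ) (x : ℕ → ℤ) :
    majStat (n + 2) x = majStat (n + 1) x + if x (n + 1) < x n then n + 1 else 0 := by
  simp [majStat, Finset.sum_range_succ]

theorem maj_congr (n : ℕ) (x y : ℕ → ℤ)
    (h : ∀ i, i + 1 < n → (x (i + 1) < x i ↔ y (i + 1) < y i)) : majStat n x = majStat n y := by
  unfold majStat
  apply Finset.sum_congr rfl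
  intro i hi
  rw [mem_range] at hi
  simp only [h i (by omega)]

theorem maj_congr_eq (n : ℕ) (x y : ℕ → ℤ)
    (h : ∀ i, i < n → x i = y i) : majStat n x = majStat n y := by
  apply maj_congr
  intro i hi
  rw [h i (by omega), h (i + 1) hi]

theorem maj_one (x : ℕ → ℤ) : majStat 1 x = 0 := by simp [majStat]
theorem maj_zero (x : ℕ → ℤ) : majStat 0 x = 0 := by simp [majStat]

theorem sum_pc {K : Type*} [CommRing K] (f : Finset ℕ → K) (N k : ℕ) :
    ∑ F ∈ powersetCard (k + 1) (range (N + 1)), f F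
      = ∑ F ∈ powersetCard (k + 1) (range N), f F
        + ∑ F ∈ powersetCard k (range N), f (insert N F) := by
  have hr : range (N + 1) = insert N (range N) := by
    ext; simp; omega
  have hN : N ∉ range N := by simp
  have key : ∀ j, ∀ F ∈ powersetCard j (range N), N ∉ F := by
    intro j F hF h
    exact hN ((mem_powersetCard.1 hF).1 h)
  rw [hr, powersetCard_succ_insert hN, Finset.sum_union, Finset.sum_image]
  · intro F hF F' hF' h
    have := congrArg (fun s => s.erase N) h
    simpa [Finset.erase_insert (key _ F hF), Finset.erase_insert (key _ F' hF')] using this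
  · rw [Finset.disjoint_left]
    intro F hF hF'
    obtain ⟨F', _, rfl⟩ := mem_image.1 hF'
    exact key _ _ hF (mem_insert_self _ _)

theorem shW_top (v : ℕ → ℤ) (F : Finset ℕ) (m k N : ℕ) (hN : N = m + k)
    (hF : F ∈ powersetCard k (range N)) : shW v F N = v m := by
  rw [mem_powersetCard] at hF
  have h1 : N ∉ F := fun h => by simpa using hF.1 h
  have h2 := count_sub F N hF.1
  unfold shW
  rw [if_neg h1]
  congr 1
  omega

theorem shW_top0 (v : ℕ → ℤ) (F : Finset ℕ) (N : ℕ) : shW v (insert N F) N = 0 := by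
  simp [shW]

theorem shuffle_ind {K : Type*} [CommRing K] (p : K) (v : ℕ → ℤ) (hv : ∀ i, v i ≠ 0) (N : ℕ) :
    ∀ m k, m + k = N →
    (∑ F ∈ powersetCard k (range (m + k)), p ^ majStat (m + k + 1) (shW v F)
      = p ^ majStat (m + 1) v * (if 0 < v m then gB p m k else p ^ k * gB p m k)) ∧
    (∑ F ∈ powersetCard k (range (m + k)), p ^ majStat (m + k + 1) (shW v (insert (m + k) F))
      = p ^ majStat m v * (if 0 < v (m - 1) then p ^ m * gB p m k else gB p m k)) := by
  induction N with
  | zero =>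
    intro m k h
    obtain rfl : m = 0 := by omega
    obtain rfl : k = 0 := by omega
    simp [maj_one, maj_zero, gB]
  | succ N ih =>
    intro m k h
    rcases k with _ | k
    · have e1 : shW v ∅ = v := by ext i; simp [shW, Nat.count_true]
      obtain ⟨m, rfl⟩ : ∃ m', m = m' + 1 := ⟨m - 1, by omega⟩
      constructor
      · simp [e1, gB_zero_right]
      · simp only [powersetCard_zero, sum_singleton, gB_zero_right, add_zero, maj_succ]
        rw [maj_congr_eq (m + 1) _ _ (fun i hi => shW_insert v ∅ (m + 1) i hi), shW_top0,
          shW_insert v ∅ (m + 1) m (by omega), e1]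
        simp only [Nat.add_sub_cancel]
        split_ifs <;> simp [pow_add]
    · rcases m with _ | m
      · have e0 : powersetCard (k + 1) (range (0 + (k + 1))) = {range (k + 1)} := by
          have := Finset.powersetCard_self (range (k + 1))
          rw [card_range] at this
          rw [zero_add, this]
        have e1 : ∀ i, i < k + 1 → shW v (range (k + 1)) i = 0 := by
          intro i hi
          simp [shW, hi]
        have e2 : majStat (k + 1) (shW v (range (k + 1))) = 0 := by
          rw [maj_congr_eq _ _ (fun _ => 0) e1]
          simp [majStat]
        have e3 : shW v (range (k + 1)) (k + 1) = v 0 := by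
          apply shW_top v _ 0 (k + 1) (k + 1) (by omega)
          simp [mem_powersetCard]
        rw [e0]
        simp only [sum_singleton, gB_zero_left, zero_add, maj_succ, maj_zero, maj_one]
        constructor
        · rw [e2, e3, e1 k (by omega)]
          have := hv 0
          by_cases h0 : 0 < v 0
          · rw [if_pos h0, if_neg (by omega)]; simp
          · rw [if_neg h0, if_pos (by omega)]; simp
        · rw [shW_top0, shW_insert _ _ _ _ (by omega : k < k + 1), e1 k (by omega),
            maj_congr_eq (k + 1) _ _ (fun i hi => shW_insert v _ (k + 1) i hi), e2]
          simp
      · obtain ⟨A, -⟩ := ih m (k + 1) (by omega)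
        obtain ⟨-, B⟩ := ih (m + 1) k (by omega)
        have hvm := hv m
        have hvm1 := hv (m + 1)
        have n1 : m + 1 + (k + 1) = (m + 1 + k) + 1 := by ring
        have n2 : m + (k + 1) = m + 1 + k := by ring
        rw [n2] at A
        have hA : ∀ F ∈ powersetCard (k + 1) (range (m + 1 + k)),
            shW v F (m + 1 + k) = v m := fun F hF => shW_top v F m (k + 1) _ n2.symm hF
        have hA1 : ∀ F ∈ powersetCard (k + 1) (range (m + 1 + k)),
            shW v F (m + 1 + k + 1) = v (m + 1) := fun F hF => by
          apply shW_top v F (m + 1) (k + 1) _ n1.symm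
          exact powersetCard_mono (range_subset_range.2 (by omega)) hF
        have hB1 : ∀ F ∈ powersetCard k (range (m + 1 + k)),
            shW v (insert (m + 1 + k) F) (m + 1 + k + 1) = v (m + 1) := fun F hF => by
          apply shW_top v _ (m + 1) (k + 1) _ n1.symm
          rw [mem_powersetCard] at hF ⊢
          have : m + 1 + k ∉ F := fun h => by simpa using hF.1 h
          refine ⟨?_, by rw [card_insert_of_notMem this, hF.2]⟩
          intro i hi
          rcases mem_insert.1 hi with rfl | hi
          · simp
          · have := hF.1 hi
            simp at this ⊢
            omega
        rw [n1]
        constructor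
        · rw [sum_pc]
          have s1 : ∑ F ∈ powersetCard (k + 1) (range (m + 1 + k)),
              p ^ majStat (m + 1 + k + 1 + 1) (shW v F)
              = (∑ F ∈ powersetCard (k + 1) (range (m + 1 + k)),
              p ^ majStat (m + 1 + k + 1) (shW v F)) *
                (if v (m + 1) < v m then p ^ (m + 1 + k + 1) else 1) := by
            rw [Finset.sum_mul]
            apply Finset.sum_congr rfl
            intro F hF
            rw [maj_succ, hA F hF, hA1 F hF]
            split_ifs <;> simp [pow_add]
          have s2 : ∑ F ∈ powersetCard k (range (m + 1 + k)),
              p ^ majStat (m + 1 + k + 1 + 1) (shW v (insert (m + 1 + k) F))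
              = (∑ F ∈ powersetCard k (range (m + 1 + k)),
              p ^ majStat (m + 1 + k + 1) (shW v (insert (m + 1 + k) F))) *
                (if v (m + 1) < 0 then p ^ (m + 1 + k + 1) else 1) := by
            rw [Finset.sum_mul]
            apply Finset.sum_congr rfl
            intro F hF
            rw [maj_succ, hB1 F hF, shW_top0]
            split_ifs <;> simp [pow_add]
          rw [s1, s2, A, B, maj_succ]
          simp only [Nat.add_sub_cancel]
          have g1 := gB_succ p m k
          have g2 := gB_succ' p m k
          rcases lt_or_gt_of_ne hvm with a | a <;> rcases lt_or_gt_of_ne hvm1 with b | b <;>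
          by_cases c : v (m + 1) < v m <;>
          simp only [a, b, c, a.not_gt, b.not_gt, if_true, if_false, pow_add, add_zero, pow_zero] <;>
          first
          | (exfalso; omega)
          | (rw [g1]; ring1)
          | (rw [g2]; ring1)
        · rw [sum_pc]
          have s1 : ∑ F ∈ powersetCard (k + 1) (range (m + 1 + k)),
              p ^ majStat (m + 1 + k + 1 + 1) (shW v (insert (m + 1 + k + 1) F))
              = (∑ F ∈ powersetCard (k + 1) (range (m + 1 + k)),
              p ^ majStat (m + 1 + k + 1) (shW v F)) *
                (if 0 < v m then p ^ (m + 1 + k + 1) else 1) := by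
            rw [Finset.sum_mul]
            apply Finset.sum_congr rfl
            intro F hF
            rw [maj_succ, shW_insert _ _ _ _ (by omega : m + 1 + k < m + 1 + k + 1), hA F hF,
              shW_top0, maj_congr_eq _ _ _ (fun i hi => shW_insert v F (m + 1 + k + 1) i hi)]
            split_ifs <;> simp [pow_add]
          have s2 : ∑ F ∈ powersetCard k (range (m + 1 + k)),
              p ^ majStat (m + 1 + k + 1 + 1)
                (shW v (insert (m + 1 + k + 1) (insert (m + 1 + k) F)))
              = (∑ F ∈ powersetCard k (range (m + 1 + k)),
              p ^ majStat (m + 1 + k + 1) (shW v (insert (m + 1 + k) F))) := by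
            apply Finset.sum_congr rfl
            intro F hF
            rw [maj_succ, shW_insert _ _ _ _ (by omega : m + 1 + k < m + 1 + k + 1),
              shW_top0, shW_top0,
              maj_congr_eq _ _ _ (fun i hi => shW_insert v _ (m + 1 + k + 1) i hi)]
            simp
          rw [s1, s2, A, B]
          simp only [Nat.add_sub_cancel]
          have g1 := gB_succ p m k
          have g2 := gB_succ' p m k
          rcases lt_or_gt_of_ne hvm with a | a <;>
          simp only [a, a.not_gt, if_true, if_false] <;>
          first
          | (rw [g1]; ring1)
          | (rw [g2]; ring1)

theorem shuffle_thm {K : Type*} [CommRing K] (p : K) (v : ℕ → ℤ) (m k : ℕ)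
    (hv : ∀ i < m, v i ≠ 0) :
    ∑ F ∈ powersetCard k (range (m + k)), p ^ majStat (m + k) (shW v F)
      = p ^ majStat m v * gB p m k := by
  wlog hv' : ∀ i, v i ≠ 0 generalizing v
  · let v' : ℕ → ℤ := fun i => if i < m then v i else 1
    have h := this v' (fun i hi => by simp [v', hi, hv i hi]) (fun i => by
      by_cases hi : i < m
      · simp [v', hi, hv i hi]
      · simp [v', hi])
    rw [maj_congr_eq m v' v (fun i hi => by simp [v', hi])] at h
    rw [← h]
    apply Finset.sum_congr rfl
    intro F hF
    rw [mem_powersetCard] at hF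
    congr 1
    apply maj_congr_eq
    intro i hi
    unfold shW
    by_cases hiF : i ∈ F
    · simp [hiF]
    · have : Nat.count (fun j => j ∉ F) i < m := by
        have h1 := Nat.count_strict_mono (p := fun j => j ∉ F) hiF hi
        have h2 := count_sub F _ hF.1
        omega
      simp only [hiF, if_false, v', this, if_true]
  rcases k with _ | k
  · have e1 : shW v ∅ = v := by ext i; simp [shW, Nat.count_true]
    simp [e1, gB_zero_right]
  · rw [← add_assoc, sum_pc]
    obtain ⟨-, B⟩ := shuffle_ind p v hv' _ m k rfl
    rw [B]
    rcases m with _ | m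
    · rw [Finset.powersetCard_eq_empty.2 (by simp)]
      simp [gB_zero_left]
    · obtain ⟨A, -⟩ := shuffle_ind p v hv' _ m (k + 1) rfl
      rw [show m + 1 + k = m + (k + 1) by ring, A]
      have g1 := gB_succ p m k
      have g2 := gB_succ' p m k
      simp only [Nat.add_sub_cancel]
      split_ifs
      · rw [g2]; ring
      · rw [g1]; ring

abbrev SP (n : ℕ) := Equiv.Perm (Fin n) × (Fin n → Bool)

/-- full generating function -/
def BB {K : Type*} [CommRing K] (p y : K) (n : ℕ) : K :=
  ∑ w : SP n, p ^ majStat n (sword n w) * y ^ negStat n (sword n w)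

/-- derangement generating function -/
def DD {K : Type*} [CommRing K] (p y : K) (n : ℕ) : K :=
  ∑ w ∈ Finset.univ.filter (fun w : SP n => fixPlus n (sword n w) = 0),
    p ^ majStat n (sword n w) * y ^ negStat n (sword n w)

theorem sword_fin {n : ℕ} (w : SP n) (i : Fin n) :
    sword n w i = if w.2 i then -(((w.1 i : ℕ) : ℤ) + 1) else (((w.1 i : ℕ) : ℤ) + 1) := by
  simp [sword]

theorem sword_bound {n : ℕ} (w : SP n) (i : ℕ) (hi : i < n) :
    sword n w i ≠ 0 ∧ sword n w i ≤ n ∧ -(n : ℤ) ≤ sword n w i := by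
  have := sword_fin w ⟨i, hi⟩
  simp only at this
  rw [this]
  have h := (w.1 ⟨i, hi⟩).2
  split_ifs <;> omega

theorem sword_injective {n : ℕ} (w w' : SP n) (h : ∀ i < n, sword n w i = sword n w' i) :
    w = w' := by
  have key : ∀ i : Fin n, w.1 i = w'.1 i ∧ w.2 i = w'.2 i := by
    intro i
    have := h i i.2
    rw [sword_fin, sword_fin] at this
    cases h1 : w.2 i <;> cases h2 : w'.2 i <;> simp [h1, h2] at this ⊢ <;>
      first
      | omega
      | exact Fin.ext this
  ext1
  · ext i; rw [(key i).1]
  · ext i; rw [(key i).2]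

theorem neg_sword {n : ℕ} (w : SP n) :
    negStat n (sword n w) = ∑ i : Fin n, if w.2 i then 1 else 0 := by
  unfold negStat
  rw [Finset.card_filter, Finset.sum_range]
  apply Finset.sum_congr rfl
  intro i _
  rw [sword_fin]
  cases h : w.2 i <;> simp <;> omega

/-- insert letter `±(n+1)` at position `i` -/
def insW {n : ℕ} (a : Fin (n + 1) × Bool × SP n) : SP (n + 1) :=
  ((finSuccEquiv' a.1).trans ((Equiv.optionCongr a.2.2.1).trans (finSuccEquiv' (Fin.last n)).symm),
    Fin.insertNth a.1 a.2.1 a.2.2.2)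

theorem insW_at {n : ℕ} (a : Fin (n + 1) × Bool × SP n) : (insW a).1 a.1 = Fin.last n := by
  simp [insW]

theorem insW_succAbove {n : ℕ} (a : Fin (n + 1) × Bool × SP n) (j : Fin n) :
    (insW a).1 (a.1.succAbove j) = (a.2.2.1 j).castSucc := by
  simp [insW]

theorem insW_bij (n : ℕ) : Function.Bijective (insW (n := n)) := by
  rw [Fintype.bijective_iff_injective_and_card]
  constructor
  · rintro ⟨i, b, τ, t⟩ ⟨i', b', τ', t'⟩ h
    have h0 := insW_at (i, b, τ, t)
    have h0' := insW_at (i', b', τ', t')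
    rw [h] at h0
    obtain rfl : i = i' := (insW (i', b', τ', t')).1.injective (h0.trans h0'.symm)
    have hb := congrFun (congrArg Prod.snd h) i
    simp [insW] at hb
    have hτ : τ = τ' := by
      ext j
      have h1 := insW_succAbove (i, b, τ, t) j
      have h2 := insW_succAbove (i, b', τ', t') j
      rw [h] at h1
      have := h1.symm.trans h2
      simpa [Fin.ext_iff] using this
    have ht : t = t' := by
      ext j
      have := congrFun (congrArg Prod.snd h) (i.succAbove j)
      simp [insW] at this
      rw [this]
    rw [hb, hτ, ht]
  · simp [Fintype.card_perm, Nat.factorial_succ, pow_succ]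
    ring

theorem count_single (i l : ℕ) :
    Nat.count (fun j => j ∉ ({i} : Finset ℕ)) l = if l ≤ i then l else l - 1 := by
  induction l with
  | zero => simp
  | succ l ih =>
    rw [Nat.count_succ, ih]
    simp only [mem_singleton]
    split_ifs <;> omega

theorem sword_insW {n : ℕ} (a : Fin (n + 1) × Bool × SP n) (l : ℕ) (hl : l < n + 1) :
    sword (n + 1) (insW a) l =
      shW (fun j => sword n a.2.2 j - (if a.2.1 then -((n : ℤ) + 1) else (n : ℤ) + 1)) {(a.1 : ℕ)} l
        + (if a.2.1 then -((n : ℤ) + 1) else (n : ℤ) + 1) := by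
  have h := sword_fin (insW a) ⟨l, hl⟩
  simp only at h
  rw [h]
  unfold shW
  rw [count_single]
  by_cases hla : (⟨l, hl⟩ : Fin (n + 1)) = a.1
  · rw [hla, insW_at]
    have : l ∈ ({(a.1 : ℕ)} : Finset ℕ) := by rw [← hla]; simp
    simp [this, insW]
  · obtain ⟨j, hj⟩ := Fin.exists_succAbove_eq hla
    have h1 : l ∉ ({(a.1 : ℕ)} : Finset ℕ) := by
      rw [mem_singleton]; intro h; exact hla (Fin.ext h)
    have h2 : (if l ≤ (a.1 : ℕ) then l else l - 1) = j := by
      have := congrArg Fin.val hj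
      simp only [Fin.succAbove, Fin.lt_def] at this
      split_ifs at this ⊢ <;> simp at * <;> omega
    rw [← hj, insW_succAbove, if_neg h1, h2]
    beta_reduce
    rw [sword_fin]
    simp [insW]

theorem BB_succ {K : Type*} [CommRing K] (p y : K) (n : ℕ) :
    BB p y (n + 1) = (1 + y) * gB p n 1 * BB p y n := by
  unfold BB
  rw [← (insW_bij n).sum_comp, Fintype.sum_prod_type_right]
  have key : ∀ (b : Bool) (w : SP n),
      ∑ i : Fin (n + 1), p ^ majStat (n + 1) (sword (n + 1) (insW (i, b, w)))
        * y ^ negStat (n + 1) (sword (n + 1) (insW (i, b, w)))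
      = (if b then y else 1) * (gB p n 1 *
          (p ^ majStat n (sword n w) * y ^ negStat n (sword n w))) := by
    intro b w
    set c : ℤ := (if b then -((n : ℤ) + 1) else (n : ℤ) + 1) with hc
    have hs := shuffle_thm p (fun j => sword n w j - c) n 1 (by
      intro i hi
      have := sword_bound w i hi
      simp only [hc]
      split_ifs <;> omega)
    rw [maj_congr n (fun j => sword n w j - c) (sword n w) (by intro i _; simp)] at hs
    rw [Finset.powersetCard_one, Finset.sum_map, Finset.sum_range] at hs
    have hn : ∀ i, negStat (n + 1) (sword (n + 1) (insW (i, b, w)))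
        = (if b then 1 else 0) + negStat n (sword n w) := by
      intro i
      rw [neg_sword, neg_sword, Fin.sum_univ_succAbove _ i]
      simp [insW]
    have hm : ∀ i, majStat (n + 1) (sword (n + 1) (insW (i, b, w)))
        = majStat (n + 1) (shW (fun j => sword n w j - c) {(i : ℕ)}) := by
      intro i
      apply maj_congr
      intro l hl
      rw [sword_insW _ _ hl, sword_insW _ _ (by omega : l < n + 1)]
      simp [hc]
    simp only [hn, hm]
    rw [← Finset.sum_mul]
    have hs' : ∑ i : Fin (n + 1), p ^ majStat (n + 1) (shW (fun j => sword n w j - c) {(i : ℕ)})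
      = p ^ majStat n (sword n w) * gB p n 1 := hs
    rw [hs']
    cases b <;> simp [pow_add] <;> ring
  rw [Fintype.sum_prod_type]
  simp only [key]
  simp only [← Finset.mul_sum]
  rw [← Finset.sum_mul]
  simp
  ring

theorem BB_eq {K : Type*} [CommRing K] (p y : K) (n : ℕ) :
    BB p y n * (1 - p) ^ n = (1 + y) ^ n * qq p n := by
  induction n with
  | zero => 
    have : ∀ x : ℕ → ℤ, negStat 0 x = 0 := fun x => by simp [negStat]
    simp [BB, qq, maj_zero, this]
  | succ n ih =>
    have h := gB_key p _ n 0 rfl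
    simp only [gB_zero_right] at h
    rw [BB_succ, qq_succ, pow_succ, pow_succ]
    linear_combination (1 + y) * gB p n 1 * (1 - p) * ih - (1 + y) ^ n * qq p n * (1 + y) * h

theorem inf_notMem (F : Finset ℕ) : (Set.ofPred (fun j => j ∉ F)).Infinite :=
  F.finite_toSet.infinite_compl

/-- the enumeration of the complement of `F` -/
def enF (F : Finset ℕ) (j : ℕ) : ℕ := Nat.nth (fun j => j ∉ F) j

/-- the inverse of the enumeration -/
def coF (F : Finset ℕ) (i : ℕ) : ℕ := Nat.count (fun j => j ∉ F) i

theorem enF_mono (F : Finset ℕ) : StrictMono (enF F) := Nat.nth_strictMono (inf_notMem F)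
theorem enF_notMem (F : Finset ℕ) (j : ℕ) : enF F j ∉ F :=
  Nat.nth_mem_of_infinite (inf_notMem F) j
theorem coF_enF (F : Finset ℕ) (j : ℕ) : coF F (enF F j) = j :=
  Nat.count_nth_of_infinite (inf_notMem F) j
theorem enF_coF (F : Finset ℕ) (i : ℕ) (h : i ∉ F) : enF F (coF F i) = i :=
  Nat.nth_count (p := fun j => j ∉ F) h
theorem coF_lt (F : Finset ℕ) (n i : ℕ) (hF : F ⊆ range n) (h : i ∉ F) (hi : i < n) :
    coF F i < n - F.card := by
  have h1 := Nat.count_strict_mono (p := fun j => j ∉ F) h hi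
  have h2 := count_sub F n hF
  unfold coF
  omega
theorem enF_lt (F : Finset ℕ) (n j : ℕ) (hF : F ⊆ range n) (h : j < n - F.card) :
    enF F j < n := by
  apply Nat.nth_lt_of_lt_count
  have h2 := count_sub F n hF
  omega
theorem coF_succ (F : Finset ℕ) (i : ℕ) (h : i ∉ F) : coF F (i + 1) = coF F i + 1 := by
  unfold coF
  rw [Nat.count_succ, if_pos h]

/-- odd extension to integers -/
def enZ (F : Finset ℕ) (z : ℤ) : ℤ :=
  if 0 < z then (enF F (z.toNat - 1) : ℤ) + 1
  else if z < 0 then -((enF F ((-z).toNat - 1) : ℤ) + 1) else 0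

theorem enZ_mono (F : Finset ℕ) : StrictMono (enZ F) := by
  intro a b hab
  unfold enZ
  have hm := enF_mono F
  split_ifs with h1 h2 h3 h4 h5 h6 h7 h8 <;> try omega
  · have := @hm (a.toNat - 1) (b.toNat - 1) (by omega)
    omega
  · have := @hm ((-b).toNat - 1) ((-a).toNat - 1) (by omega)
    omega

theorem enZ_pos (F : Finset ℕ) (j : ℕ) : enZ F ((j : ℤ) + 1) = (enF F j : ℤ) + 1 := by
  unfold enZ
  rw [if_pos (by omega)]
  congr 3

theorem enZ_neg (F : Finset ℕ) (j : ℕ) : enZ F (-((j : ℤ) + 1)) = -((enF F j : ℤ) + 1) := by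
  unfold enZ
  rw [if_neg (by omega), if_pos (by omega)]
  congr 4

theorem enZ_ne (F : Finset ℕ) (z : ℤ) (i : ℕ) (hi : i ∈ F) : enZ F z ≠ (i : ℤ) + 1 := by
  unfold enZ
  split_ifs
  · intro h
    have : enF F (z.toNat - 1) = i := by omega
    exact enF_notMem F (z.toNat - 1) (this ▸ hi)
  · omega
  · omega

/-- positions outside `F` -/
def posE (n : ℕ) (F : Finset ℕ) (hF : F ⊆ range n) :
    Fin (n - F.card) ≃ {i : Fin n // (i : ℕ) ∉ F} where
  toFun j := ⟨⟨enF F j, enF_lt F n j hF j.2⟩, enF_notMem F j⟩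
  invFun i := ⟨coF F i.1, coF_lt F n i.1 hF i.2 i.1.2⟩
  left_inv j := by simp [coF_enF]
  right_inv i := by
    ext
    simp [enF_coF F i.1 i.2]

/-- extension of a signed permutation by fixed points in `F` -/
def extW (n : ℕ) (F : Finset ℕ) (hF : F ⊆ range n) (v : SP (n - F.card)) : SP n :=
  (v.1.extendDomain (posE n F hF),
    fun i => if h : (i : ℕ) ∉ F then v.2 ((posE n F hF).symm ⟨i, h⟩) else false)

theorem sword_ext_mem (n : ℕ) (F : Finset ℕ) (hF : F ⊆ range n) (v : SP (n - F.card)) (i : ℕ)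
    (hi : i ∈ F) : sword n (extW n F hF v) i = (i : ℤ) + 1 := by
  have hin : i < n := by simpa using hF hi
  have h := sword_fin (extW n F hF v) ⟨i, hin⟩
  simp only at h
  rw [h]
  have h1 : (extW n F hF v).1 ⟨i, hin⟩ = ⟨i, hin⟩ := by
    unfold extW
    apply Equiv.Perm.extendDomain_apply_not_subtype
    simpa using hi
  rw [h1]
  simp [extW, hi]

theorem sword_ext_en (n : ℕ) (F : Finset ℕ) (hF : F ⊆ range n) (v : SP (n - F.card))
    (j : Fin (n - F.card)) :
    sword n (extW n F hF v) (enF F j) = enZ F (sword (n - F.card) v j) := by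
  have h := sword_fin (extW n F hF v) (posE n F hF j).1
  have h0 : (((posE n F hF j).1 : Fin n) : ℕ) = enF F j := rfl
  rw [h0] at h
  rw [h, sword_fin]
  have h1 : (extW n F hF v).1 (posE n F hF j).1 = (posE n F hF (v.1 j)).1 := by
    unfold extW
    exact Equiv.Perm.extendDomain_apply_image _ _ _
  have h2 : (extW n F hF v).2 (posE n F hF j).1 = v.2 j := by
    unfold extW
    simp only
    rw [dif_pos (posE n F hF j).2]
    simp
  rw [h1, h2]
  have h3 : ((posE n F hF (v.1 j)).1 : ℕ) = enF F (v.1 j) := rfl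
  rw [h3]
  split_ifs
  · rw [enZ_neg]
  · rw [enZ_pos]

theorem sword_ext_notMem (n : ℕ) (F : Finset ℕ) (hF : F ⊆ range n) (v : SP (n - F.card)) (i : ℕ)
    (hi : i ∉ F) (hin : i < n) :
    sword n (extW n F hF v) i = enZ F (sword (n - F.card) v (coF F i)) := by
  have := sword_ext_en n F hF v ⟨coF F i, coF_lt F n i hF hi hin⟩
  simpa only [enF_coF F i hi] using this

theorem neg_ext (n : ℕ) (F : Finset ℕ) (hF : F ⊆ range n) (v : SP (n - F.card)) :
    negStat n (sword n (extW n F hF v)) = negStat (n - F.card) (sword _ v) := by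
  rw [neg_sword, neg_sword, ← (posE n F hF).symm.sum_comp]
  rw [← Finset.sum_filter_add_sum_filter_not univ (fun i : Fin n => (i : ℕ) ∉ F)]
  have h0 : ∑ i ∈ univ.filter (fun i : Fin n => ¬ (i : ℕ) ∉ F),
      (if (extW n F hF v).2 i then 1 else 0) = 0 := by
    apply Finset.sum_eq_zero
    intro i hi
    simp only [mem_filter, mem_univ, true_and] at hi
    simp [extW, hi]
  rw [h0, add_zero, Finset.sum_subtype (p := fun i : Fin n => (i : ℕ) ∉ F) _ (by simp)]
  apply Finset.sum_congr rfl
  intro i _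
  have := i.2
  simp [extW, this]

/-- separates excedances from subcedances -/
def trW (m : ℕ) (v : ℕ → ℤ) : ℕ → ℤ :=
  fun i => if (i : ℤ) + 1 < v i then v i + (m + 1) else v i - (m + 1)

theorem fixPlus_zero (n : ℕ) (x : ℕ → ℤ) :
    fixPlus n x = 0 ↔ ∀ i < n, x i ≠ (i : ℤ) + 1 := by
  simp [fixPlus, Finset.filter_eq_empty_iff]

theorem trW_pos (m : ℕ) (v : SP m) (i : ℕ) (hi : i < m) (h : (i : ℤ) + 1 < sword m v i) :
    0 < trW m (sword m v) i := by
  unfold trW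
  rw [if_pos h]
  omega

theorem trW_neg (m : ℕ) (v : SP m) (i : ℕ) (hi : i < m) (h : ¬ (i : ℤ) + 1 < sword m v i) :
    trW m (sword m v) i < 0 := by
  unfold trW
  rw [if_neg h]
  have := sword_bound v i hi
  omega

theorem trW_desc (m : ℕ) (v : SP m) (hv : fixPlus m (sword m v) = 0) (i : ℕ) (hi : i + 1 < m) :
    trW m (sword m v) (i + 1) < trW m (sword m v) i ↔ sword m v (i + 1) < sword m v i := by
  rw [fixPlus_zero] at hv
  have h1 := hv i (by omega)
  have h2 := hv (i + 1) hi
  have b1 := sword_bound v i (by omega)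
  have b2 := sword_bound v (i + 1) hi
  unfold trW
  push_cast at *
  split_ifs <;> omega

theorem maj_ext (n : ℕ) (F : Finset ℕ) (hF : F ⊆ range n) (v : SP (n - F.card))
    (hv : fixPlus (n - F.card) (sword _ v) = 0) :
    majStat n (sword n (extW n F hF v)) = majStat n (shW (trW (n - F.card) (sword _ v)) F) := by
  apply maj_congr
  intro i hi
  have hz1 : ∀ l, l ∈ F → shW (trW (n - F.card) (sword _ v)) F l = 0 := by
    intro l hl; simp [shW, hl]
  have hz2 : ∀ l, l ∉ F → shW (trW (n - F.card) (sword _ v)) F l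
      = trW (n - F.card) (sword _ v) (coF F l) := by
    intro l hl; simp [shW, hl, coF]
  have hpos : ∀ l, l ∉ F → l < n →
      ((0 < trW (n - F.card) (sword _ v) (coF F l) ∧ (l : ℤ) + 1 < sword n (extW n F hF v) l) ∨
       (trW (n - F.card) (sword _ v) (coF F l) < 0 ∧ sword n (extW n F hF v) l < (l : ℤ) + 1)) := by
    intro l hl hln
    have hc := coF_lt F n l hF hl hln
    rw [sword_ext_notMem n F hF v l hl hln]
    have e : (l : ℤ) + 1 = enZ F ((coF F l : ℤ) + 1) := by rw [enZ_pos, enF_coF F l hl]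
    rw [e, (enZ_mono F).lt_iff_lt, (enZ_mono F).lt_iff_lt]
    have := (fixPlus_zero _ _).1 hv _ hc
    by_cases h : (coF F l : ℤ) + 1 < sword (n - F.card) v (coF F l)
    · exact Or.inl ⟨trW_pos _ v _ hc h, h⟩
    · exact Or.inr ⟨trW_neg _ v _ hc h, by omega⟩
  have hne : ∀ l l', l ∉ F → l < n → l' ∈ F → sword n (extW n F hF v) l ≠ (l' : ℤ) + 1 := by
    intro l l' hl hln hl'
    rw [sword_ext_notMem n F hF v l hl hln]
    exact enZ_ne F _ _ hl'
  by_cases h1 : i ∈ F <;> by_cases h2 : i + 1 ∈ F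
  · rw [hz1 _ h1, hz1 _ h2, sword_ext_mem _ _ _ _ _ h1, sword_ext_mem _ _ _ _ _ h2]
    simp
  · rw [hz1 _ h1, hz2 _ h2, sword_ext_mem _ _ _ _ _ h1]
    have a := hpos _ h2 hi
    have b := hne _ _ h2 hi h1
    push_cast at *
    omega
  · rw [hz1 _ h2, hz2 _ h1, sword_ext_mem _ _ _ _ _ h2]
    have a := hpos _ h1 (by omega)
    have b := hne _ _ h1 (by omega) h2
    push_cast at *
    omega
  · have hc := coF_lt F n (i + 1) hF h2 hi
    rw [hz2 _ h1, hz2 _ h2, sword_ext_notMem n F hF v _ h2 hi,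
      sword_ext_notMem n F hF v _ h1 (by omega), (enZ_mono F).lt_iff_lt]
    rw [coF_succ F i h1] at hc ⊢
    exact (trW_desc _ v hv _ hc).symm

/-- set of positive fixed points -/
def fixS (n : ℕ) (x : ℕ → ℤ) : Finset ℕ := (range n).filter (fun i => x i = (i : ℤ) + 1)

theorem fixS_ext (n : ℕ) (F : Finset ℕ) (hF : F ⊆ range n) (v : SP (n - F.card)) :
    fixS n (sword n (extW n F hF v)) = F ↔ fixPlus (n - F.card) (sword _ v) = 0 := by
  rw [fixPlus_zero]
  constructor
  · intro h j hj he
    have h1 := sword_ext_en n F hF v ⟨j, hj⟩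
    simp only at h1
    rw [he, enZ_pos] at h1
    have : enF F j ∈ fixS n (sword n (extW n F hF v)) := by
      simp [fixS, h1, enF_lt F n j hF hj]
    rw [h] at this
    exact enF_notMem F j this
  · intro h
    ext i
    simp only [fixS, mem_filter, mem_range]
    constructor
    · rintro ⟨hi, he⟩
      by_contra hiF
      rw [sword_ext_notMem n F hF v i hiF hi] at he
      apply h _ (coF_lt F n i hF hiF hi)
      apply (enZ_mono F).injective
      rw [he, enZ_pos, enF_coF F i hiF]
    · intro hi
      exact ⟨by simpa using hF hi, sword_ext_mem _ _ _ _ _ hi⟩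

theorem ext_inj (n : ℕ) (F : Finset ℕ) (hF : F ⊆ range n) :
    Function.Injective (extW n F hF) := by
  intro v v' h
  apply sword_injective
  intro j hj
  have h1 := sword_ext_en n F hF v ⟨j, hj⟩
  have h2 := sword_ext_en n F hF v' ⟨j, hj⟩
  rw [h, h2] at h1
  exact ((enZ_mono F).injective h1).symm

theorem ext_surj (n : ℕ) (F : Finset ℕ) (hF : F ⊆ range n) (w : SP n)
    (hw : fixS n (sword n w) = F) : ∃ v, extW n F hF v = w := by
  have hfix : ∀ i : Fin n, (i : ℕ) ∈ F → w.1 i = i ∧ w.2 i = false := by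
    intro i hi
    rw [← hw] at hi
    simp only [fixS, mem_filter, mem_range] at hi
    have := hi.2
    rw [sword_fin] at this
    cases h : w.2 i <;> simp [h] at this ⊢
    · exact Fin.ext this
    · omega
  have hiff : ∀ i : Fin n, ((w.1 i : ℕ) ∉ F) ↔ ((i : ℕ) ∉ F) := by
    intro i
    rw [not_iff_not]
    constructor
    · intro h
      have h1 := (hfix _ h).1
      have := w.1.injective h1
      rwa [this] at h
    · intro h
      rwa [(hfix _ h).1]
  refine ⟨((posE n F hF).symm.permCongr (w.1.subtypePerm hiff),
    fun j => w.2 (posE n F hF j).1), ?_⟩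
  ext1
  · ext i
    by_cases hi : (i : ℕ) ∈ F
    · unfold extW
      simp only
      rw [Equiv.Perm.extendDomain_apply_not_subtype _ _ (by simpa using hi), (hfix i hi).1]
    · unfold extW
      simp only
      rw [Equiv.Perm.extendDomain_apply_subtype (p := fun i : Fin n => (i : ℕ) ∉ F) _ _ hi]
      simp [Equiv.permCongr_apply]
  · ext i
    by_cases hi : (i : ℕ) ∈ F
    · simp [extW, hi, (hfix i hi).2]
    · simp [extW, hi]

theorem fiber_sum {K : Type*} [CommRing K] (p y : K) (n : ℕ) (F : Finset ℕ) (hF : F ⊆ range n) :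
    ∑ w ∈ univ.filter (fun w : SP n => fixS n (sword n w) = F),
      p ^ majStat n (sword n w) * y ^ negStat n (sword n w)
    = ∑ v ∈ univ.filter (fun v : SP (n - F.card) => fixPlus (n - F.card) (sword _ v) = 0),
      p ^ majStat n (shW (trW (n - F.card) (sword _ v)) F)
        * y ^ negStat (n - F.card) (sword _ v) := by
  symm
  apply Finset.sum_bij (fun v _ => extW n F hF v)
  · intro v hv
    simp only [mem_filter, mem_univ, true_and] at hv ⊢
    exact (fixS_ext n F hF v).2 hv
  · intro v _ v' _ h
    exact ext_inj n F hF h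
  · intro w hw
    simp only [mem_filter, mem_univ, true_and] at hw
    obtain ⟨v, rfl⟩ := ext_surj n F hF w hw
    refine ⟨v, ?_, rfl⟩
    simp only [mem_filter, mem_univ, true_and]
    exact (fixS_ext n F hF v).1 hw
  · intro v hv
    simp only [mem_filter, mem_univ, true_and] at hv
    rw [maj_ext n F hF v hv, neg_ext]

theorem BB_DD {K : Type*} [CommRing K] (p y : K) (n : ℕ) :
    BB p y n = ∑ k ∈ range (n + 1), gB p (n - k) k * DD p y (n - k) := by
  unfold BB
  rw [← Finset.sum_fiberwise_of_maps_to (t := (range n).powerset)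
    (g := fun w : SP n => fixS n (sword n w))
    (fun w _ => mem_powerset.2 (filter_subset _ _)), Finset.sum_powerset, card_range]
  apply Finset.sum_congr rfl
  intro k hk
  have hk : k ≤ n := by simpa [Nat.lt_succ_iff] using hk
  have h1 : ∀ F ∈ powersetCard k (range n),
      ∑ w ∈ univ.filter (fun w : SP n => fixS n (sword n w) = F),
        p ^ majStat n (sword n w) * y ^ negStat n (sword n w)
      = ∑ v ∈ univ.filter (fun v : SP (n - k) => fixPlus (n - k) (sword _ v) = 0),
      p ^ majStat n (shW (trW (n - k) (sword _ v)) F) * y ^ negStat (n - k) (sword _ v) := by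
    intro F hF
    rw [mem_powersetCard] at hF
    obtain ⟨hF, rfl⟩ := hF
    exact fiber_sum p y n F hF
  have h2 := Finset.sum_congr (rfl : powersetCard k (range n) = _) h1
  refine Eq.trans ?_ (h2.trans ?_)
  · apply Finset.sum_congr rfl
    intro F _
    apply Finset.sum_congr _ (fun _ _ => rfl)
    ext w
    simp
  rw [Finset.sum_comm]
  unfold DD
  rw [Finset.mul_sum]
  apply Finset.sum_congr rfl
  intro v hv
  simp only [mem_filter, mem_univ, true_and] at hv
  rw [← Finset.sum_mul]
  have := shuffle_thm p (trW (n - k) (sword _ v)) (n - k) k (by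
    intro i hi
    by_cases h : (i : ℤ) + 1 < sword (n - k) v i
    · exact (trW_pos _ v i hi h).ne'
    · exact (trW_neg _ v i hi h).ne)
  rw [Nat.sub_add_cancel hk, maj_congr (n - k) _ _ (trW_desc (n - k) v hv)] at this
  rw [this]
  ring

theorem DD_inv {K : Type*} [Field K] (p y : K) (n : ℕ) (h2 : ∀ m ≤ n, qq p m ≠ 0) :
    DD p y n = ∑ k ∈ range (n + 1),
      (-1) ^ k * p ^ (k * (k - 1) / 2) * gB p (n - k) k * BB p y (n - k) := by
  let E : PowerSeries K := PowerSeries.mk fun k => (qq p k)⁻¹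
  let E' : PowerSeries K := PowerSeries.mk fun k => (-1) ^ k * p ^ (k * (k - 1) / 2) * (qq p k)⁻¹
  let d : PowerSeries K := PowerSeries.mk fun k => DD p y k * (qq p k)⁻¹
  have hg : ∀ k l, k + l ≤ n → gB p l k = qq p (k + l) * (qq p k)⁻¹ * (qq p l)⁻¹ := by
    intro k l h
    have e := gB_qq p k l
    have := h2 k (by omega)
    have := h2 l (by omega)
    rw [add_comm k l, ← e]
    field_simp
  have hE : ∀ j ≤ n, PowerSeries.coeff j (E' * E) = if j = 0 then 1 else 0 := by
    intro j hj
    rw [PowerSeries.coeff_mul]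
    rcases j with _ | j
    · simp [E, E', qq]
    · have e := gB_alt p j
      have : ∀ x ∈ antidiagonal (j + 1), (-1) ^ x.1 * p ^ (x.1 * (x.1 - 1) / 2) * gB p x.2 x.1
          = qq p (j + 1) * (PowerSeries.coeff x.1 E' * PowerSeries.coeff x.2 E) := by
        intro x hx
        rw [Finset.HasAntidiagonal.mem_antidiagonal] at hx
        rw [hg _ _ (by omega), hx]
        simp [E, E']
        ring
      rw [Finset.sum_congr rfl this, ← Finset.mul_sum] at e
      simpa [h2 (j + 1) hj] using e
  have hb : ∀ j ≤ n, PowerSeries.coeff j (E * d) = BB p y j * (qq p j)⁻¹ := by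
    intro j hj
    rw [BB_DD, PowerSeries.coeff_mul, Finset.Nat.sum_antidiagonal_eq_sum_range_succ_mk,
      Finset.sum_mul]
    apply Finset.sum_congr rfl
    intro k hk
    have hk : k ≤ j := by simpa [Nat.lt_succ_iff] using hk
    rw [hg k (j - k) (by omega), Nat.add_sub_cancel' hk]
    have := h2 j hj
    simp [E, d]
    field_simp
  have h3 : PowerSeries.coeff n (E' * (E * d)) = DD p y n * (qq p n)⁻¹ := by
    rw [← mul_assoc, PowerSeries.coeff_mul, Finset.sum_eq_single (0, n)]
    · rw [hE 0 (by omega)]; simp [d]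
    · rintro ⟨a, b⟩ hx hne
      rw [Finset.HasAntidiagonal.mem_antidiagonal] at hx
      simp only at hx ⊢
      rw [hE a (by omega), if_neg, zero_mul]
      rintro rfl
      apply hne
      simp at hx
      simp [hx]
    · intro h
      exact absurd (Finset.HasAntidiagonal.mem_antidiagonal.2 (by simp)) h
  have hn := h2 n le_rfl
  have h4 : DD p y n = qq p n * PowerSeries.coeff n (E' * (E * d)) := by
    rw [h3]; field_simp
  rw [h4, PowerSeries.coeff_mul, Finset.Nat.sum_antidiagonal_eq_sum_range_succ_mk, Finset.mul_sum]
  apply Finset.sum_congr rfl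
  intro k hk
  have hk : k ≤ n := by simpa [Nat.lt_succ_iff] using hk
  rw [hb _ (by omega), hg k (n - k) (by omega), Nat.add_sub_cancel' hk]
  simp [E']
  ring

theorem DB_eq_DD {K : Type*} [CommRing K] (q Z : K) (n : ℕ) :
    DB q Z n = DD (q ^ 2) (q * Z) n := by
  unfold DB DD
  apply Finset.sum_congr rfl
  intro w _
  rw [fmajStat, pow_add, pow_mul, mul_pow]
  ring

theorem stmt13 (K : Type*) [Field K] (q Z : K) (n : ℕ)
    (h1 : (1 : K) - q ^ 2 ≠ 0) (h2 : ∀ m ≤ n, qq (q ^ 2) m ≠ 0) :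
    DB q Z n
      = ∑ k ∈ Finset.range (n + 1),
          (qq (q ^ 2) n / (qq (q ^ 2) k * qq (q ^ 2) (n - k)))
            * (-1) ^ k * q ^ (k * (k - 1))
            * (qq (q ^ 2) (n - k) / (1 - q ^ 2) ^ (n - k)) * (1 + q * Z) ^ (n - k) := by
  rw [DB_eq_DD, DD_inv _ _ _ h2]
  apply Finset.sum_congr rfl
  intro k hk
  have hk : k ≤ n := by simpa [Nat.lt_succ_iff] using hk
  have hk1 := h2 k hk
  have hk2 := h2 (n - k) (by omega)
  have g : gB (q ^ 2) (n - k) k = qq (q ^ 2) n / (qq (q ^ 2) k * qq (q ^ 2) (n - k)) := by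
    rw [eq_div_iff (mul_ne_zero hk1 hk2), mul_comm (qq (q ^ 2) k), gB_qq, Nat.sub_add_cancel hk]
  have b : BB (q ^ 2) (q * Z) (n - k)
      = qq (q ^ 2) (n - k) / (1 - q ^ 2) ^ (n - k) * (1 + q * Z) ^ (n - k) := by
    rw [div_mul_eq_mul_div, eq_div_iff (pow_ne_zero _ h1), BB_eq]
    ring
  have e : (q ^ 2) ^ (k * (k - 1) / 2) = q ^ (k * (k - 1)) := by
    rw [← pow_mul, Nat.mul_div_cancel']
    rw [mul_comm]
    exact (Nat.even_mul_pred_self k).two_dvd |> fun h => by rwa [mul_comm] at h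
  rw [g, b, e]
  ring
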